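/- Define ⟨τ_{d_1}⋯τ_{d_n}⟩_0 := (n-3)!/(d_1!⋯d_n!) if ∑_{j=1}^n d_j = n-3 and n ≥ 3, and 0 otherwise (including n < 3). Then for every n ≥ 2 and nonnegative integers d_1,…,d_n with ∑ d_j = n - 2, one has (n-1)·⟨τ_0 τ_{d_1}⋯τ_{d_n}⟩_0 = (1/2)·∑_{I ⊔ J = {1,…,n}} ⟨τ_0^2 ∏_{i∈I} τ_{d_i}⟩_0 · ⟨τ_0^2 ∏_{j∈J} τ_{d_j}⟩_0, where the sum runs over all ordered partitions of {1,…,n} into two disjoint (possibly empty) subsets. -/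

import Mathlib

open Finset

/-- The genus-zero correlator ⟨τ_{d_1}⋯τ_{d_n}⟩₀ = (n-3)!/(d_1!⋯d_n!)
when ∑ d_j = n-3 and n ≥ 3, and 0 otherwise. -/
noncomputable def corr0 (ds : Multiset ℕ) : ℚ :=
  if 3 ≤ Multiset.card ds ∧ ds.sum + 3 = Multiset.card ds then
    (Nat.factorial (Multiset.card ds - 3) : ℚ) / (ds.map (fun d => (Nat.factorial d : ℚ))).prod
  else 0

/-!
With `F d p T = p * (#T - 1)!` supported on `∑ i ∈ T, d i + p = #T`, the correlators
`⟨τ₀² ∏_I τ_{d_i}⟩₀` and `2 * (n - 1) * ⟨τ₀ ∏ τ_{d_j}⟩₀` are `F d 1` and `F d 2` divided by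
`∏ (d_i)!`, so the theorem is the case `p = q = 1` of the convolution identity
`∑ I ⊆ T, F d p I * F d q (T \ I) = F d (p + q) T`. On the level of orderings, a walk
ending at its first visit to `-(p + q)` is cut at its first visit to `-p`.
The identity is proved by removing an index `a` with `d a = 0`: by the string equation, this turns
`F d p` into `∑ j, d j * F (d - e_j) p + p * F d (p - 1)`, where `e_j` is the `j`-th unit
vector, and both operations obey a Leibniz rule for the convolution.
-/

section Convolution

open scoped Nat

/-- The number of orderings of `T` for which the walk with steps `d i - 1` reaches `-p` for the
first time at its end. The definition is the closed form given by the cycle lemma,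
`p / #T * (#T)!`, read as `1` when `T` is empty and `p = 0`. -/
def firstPassageCount {ι : Type*} (d : ι → ℕ) (p : ℕ) (T : Finset ι) : ℕ :=
  if ∑ i ∈ T, d i + p = #T then (if #T = 0 then 1 else p * (#T - 1)!) else 0

variable {ι : Type*}

lemma firstPassageCount_empty (d : ι → ℕ) (p : ℕ) :
    firstPassageCount d p ∅ = if p = 0 then 1 else 0 := by
  simp [firstPassageCount]

lemma firstPassageCount_of_nonempty (d : ι → ℕ) (p : ℕ) {T : Finset ι} (hT : T.Nonempty) :
    firstPassageCount d p T = if ∑ i ∈ T, d i + p = #T then p * (#T - 1)! else 0 := by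
  simp [firstPassageCount, hT.ne_empty]

lemma firstPassageCount_eq_zero_of_forall_ne_zero {d : ι → ℕ} {T : Finset ι} (hT : T.Nonempty)
    (hd : ∀ i ∈ T, d i ≠ 0) (p : ℕ) : firstPassageCount d p T = 0 := by
  have hcard : #T ≤ ∑ i ∈ T, d i := by
    simpa using card_nsmul_le_sum T d 1 fun i hi => Nat.one_le_iff_ne_zero.mpr (hd i hi)
  rw [firstPassageCount_of_nonempty d p hT, ite_eq_right_iff]
  intro hsum
  obtain rfl : p = 0 := by omega
  exact zero_mul _

variable [DecidableEq ι]

lemma firstPassageCount_update_of_notMem (d : ι → ℕ) (p m : ℕ) {T : Finset ι} {j : ι}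
    (hj : j ∉ T) : firstPassageCount (Function.update d j m) p T = firstPassageCount d p T := by
  simp only [firstPassageCount, sum_update_of_notMem hj]

lemma sum_update_pred_add_one {d : ι → ℕ} {T : Finset ι} {j : ι} (hj : j ∈ T) (hd : d j ≠ 0) :
    ∑ i ∈ T, Function.update d j (d j - 1) i + 1 = ∑ i ∈ T, d i := by
  rw [sum_update_of_mem hj, ← add_sum_erase T d hj, sdiff_singleton_eq_erase]
  omega

lemma mul_firstPassageCount_update_pred (d : ι → ℕ) (p : ℕ) {T : Finset ι} {j : ι} (hj : j ∈ T) :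
    d j * firstPassageCount (Function.update d j (d j - 1)) p T
      = d j * if ∑ i ∈ T, d i + p = #T + 1 then p * (#T - 1)! else 0 := by
  obtain hd | hd := eq_or_ne (d j) 0
  · simp only [hd, zero_mul]
  · rw [firstPassageCount_of_nonempty _ p ⟨j, hj⟩, ← sum_update_pred_add_one hj hd]
    simp only [add_right_comm _ 1 p, Nat.add_right_cancel_iff]

-- At `p = 0` the junk value `p - 1 = 0` is harmless, because it comes with the factor `p`.
theorem firstPassageCount_insert {d : ι → ℕ} {T : Finset ι} {a : ι} (ha : a ∉ T) (hd : d a = 0)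
    (p : ℕ) :
    firstPassageCount d p (insert a T) = p * firstPassageCount d (p - 1) T
      + ∑ j ∈ T, d j * firstPassageCount (Function.update d j (d j - 1)) p T := by
  rw [sum_congr rfl fun j hj => mul_firstPassageCount_update_pred d p hj, ← sum_mul,
    firstPassageCount_of_nonempty d p (insert_nonempty a T), sum_insert ha,
    card_insert_of_notMem ha, hd, zero_add, Nat.add_sub_cancel]
  obtain rfl | hp := Nat.eq_zero_or_pos p
  · simp only [zero_mul, ite_self, mul_zero, add_zero]
  obtain rfl | hT := T.eq_empty_or_nonempty
  · obtain rfl | hp' := eq_or_ne p 1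
    · simp [firstPassageCount_empty]
    · simp [firstPassageCount_empty, hp', show p - 1 ≠ 0 by omega]
  rw [firstPassageCount_of_nonempty d (p - 1) hT]
  by_cases hsum : ∑ i ∈ T, d i + p = #T + 1
  · have hpred : ∑ i ∈ T, d i + (p - 1) = #T := by omega
    rw [if_pos hsum, if_pos hsum, if_pos hpred, ← Nat.mul_factorial_pred hT.card_ne_zero]
    nth_rewrite 1 [← hpred]
    ring
  · have hpred : ¬ ∑ i ∈ T, d i + (p - 1) = #T := by omega
    simp only [if_neg hsum, if_neg hpred, mul_zero, add_zero]

lemma sum_powerset_insert_mul_sdiff {R : Type*} [NonUnitalNonAssocSemiring R] {T : Finset ι} {a : ι}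
    (ha : a ∉ T) (f g : Finset ι → R) :
    ∑ I ∈ (insert a T).powerset, f I * g (insert a T \ I)
      = ∑ I ∈ T.powerset, (f (insert a I) * g (T \ I) + f I * g (insert a (T \ I))) := by
  rw [sum_powerset_insert ha, ← sum_add_distrib]
  refine sum_congr rfl fun I hI => ?_
  have haI : a ∉ I := notMem_mono (mem_powerset.mp hI) ha
  rw [insert_sdiff_of_notMem _ haI, insert_sdiff_insert, sdiff_insert_of_notMem ha, add_comm]

lemma firstPassageCount_insert_mul_add_mul_insert {d : ι → ℕ} {T I : Finset ι} {a : ι}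
    (ha : a ∉ T) (hd : d a = 0) (hI : I ⊆ T) (p q : ℕ) :
    firstPassageCount d p (insert a I) * firstPassageCount d q (T \ I)
        + firstPassageCount d p I * firstPassageCount d q (insert a (T \ I))
      = p * (firstPassageCount d (p - 1) I * firstPassageCount d q (T \ I))
        + q * (firstPassageCount d p I * firstPassageCount d (q - 1) (T \ I))
        + ∑ j ∈ T, d j * (firstPassageCount (Function.update d j (d j - 1)) p I
            * firstPassageCount (Function.update d j (d j - 1)) q (T \ I)) := by
  have sum_left : (∑ j ∈ I, d j * firstPassageCount (Function.update d j (d j - 1)) p I)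
        * firstPassageCount d q (T \ I)
      = ∑ j ∈ I, d j * (firstPassageCount (Function.update d j (d j - 1)) p I
          * firstPassageCount (Function.update d j (d j - 1)) q (T \ I)) := by
    rw [sum_mul]
    refine sum_congr rfl fun j hj => ?_
    rw [firstPassageCount_update_of_notMem d q _ (notMem_sdiff_of_mem_right hj), mul_assoc]
  have sum_right : firstPassageCount d p I
        * ∑ j ∈ T \ I, d j * firstPassageCount (Function.update d j (d j - 1)) q (T \ I)
      = ∑ j ∈ T \ I, d j * (firstPassageCount (Function.update d j (d j - 1)) p I
          * firstPassageCount (Function.update d j (d j - 1)) q (T \ I)) := by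
    rw [mul_sum]
    refine sum_congr rfl fun j hj => ?_
    rw [firstPassageCount_update_of_notMem d p _ (mem_sdiff.mp hj).2, mul_left_comm]
  rw [firstPassageCount_insert (notMem_mono hI ha) hd,
    firstPassageCount_insert (notMem_mono sdiff_subset ha) hd, add_mul, mul_add, sum_left,
    sum_right, ← sum_sdiff hI]
  ring

lemma sum_powerset_firstPassageCount_mul_of_forall_ne_zero {d : ι → ℕ} {T : Finset ι}
    (hd : ∀ i ∈ T, d i ≠ 0) (p q : ℕ) :
    ∑ I ∈ T.powerset, firstPassageCount d p I * firstPassageCount d q (T \ I)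
      = firstPassageCount d (p + q) T := by
  obtain rfl | hT := T.eq_empty_or_nonempty
  · simp [firstPassageCount_empty, ← ite_and, and_comm]
  rw [firstPassageCount_eq_zero_of_forall_ne_zero hT hd]
  refine sum_eq_zero fun I hI => ?_
  obtain rfl | hI' := I.eq_empty_or_nonempty
  · rw [sdiff_empty, firstPassageCount_eq_zero_of_forall_ne_zero hT hd, mul_zero]
  · rw [firstPassageCount_eq_zero_of_forall_ne_zero hI' fun i hi => hd i (mem_powerset.mp hI hi),
      zero_mul]

theorem sum_powerset_firstPassageCount_mul (d : ι → ℕ) (p q : ℕ) (T : Finset ι) :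
    ∑ I ∈ T.powerset, firstPassageCount d p I * firstPassageCount d q (T \ I)
      = firstPassageCount d (p + q) T := by
  induction hn : #T generalizing d p q T with
  | zero =>
    obtain rfl := card_eq_zero.mp hn
    exact sum_powerset_firstPassageCount_mul_of_forall_ne_zero (by simp) p q
  | succ n ih =>
    by_cases hd : ∀ i ∈ T, d i ≠ 0
    · exact sum_powerset_firstPassageCount_mul_of_forall_ne_zero hd p q
    push Not at hd
    obtain ⟨a, haT, ha⟩ := hd
    obtain ⟨S, haS, rfl⟩ : ∃ S, a ∉ S ∧ insert a S = T :=
      ⟨T.erase a, notMem_erase a T, insert_erase haT⟩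
    replace ih := fun d p q => ih d p q S (by rwa [card_insert_of_notMem haS, Nat.succ_inj] at hn)
    have hp : p * firstPassageCount d (p - 1 + q) S = p * firstPassageCount d (p + q - 1) S := by
      obtain rfl | hp := Nat.eq_zero_or_pos p
      · simp only [zero_mul]
      · rw [Nat.sub_add_comm hp]
    have hq : q * firstPassageCount d (p + (q - 1)) S = q * firstPassageCount d (p + q - 1) S := by
      obtain rfl | hq := Nat.eq_zero_or_pos q
      · simp only [zero_mul]
      · rw [Nat.add_sub_assoc hq]
    rw [sum_powerset_insert_mul_sdiff haS, sum_congr rfl fun I hI =>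
      firstPassageCount_insert_mul_add_mul_insert haS ha (mem_powerset.mp hI) p q,
      sum_add_distrib, sum_add_distrib, ← mul_sum, ← mul_sum, sum_comm]
    simp only [← mul_sum, ih]
    rw [hp, hq, firstPassageCount_insert haS ha, add_mul]

end Convolution

section Correlators

open scoped Nat

variable {ι : Type*} (d : ι → ℕ) (T : Finset ι)

lemma corr0_replicate_zero_add_map (k : ℕ) :
    corr0 (Multiset.replicate k 0 + T.val.map d)
      = if ∑ i ∈ T, d i + 3 = #T + k then ((#T + k - 3)! : ℚ) / ∏ i ∈ T, ((d i)! : ℚ) else 0 := by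
  have hdim : 3 ≤ #T + k ∧ ∑ i ∈ T, d i + 3 = #T + k ↔ ∑ i ∈ T, d i + 3 = #T + k := by omega
  simp [corr0, add_comm k, hdim]

lemma corr0_zero_cons_zero_cons_map :
    corr0 (0 ::ₘ 0 ::ₘ T.val.map d) = firstPassageCount d 1 T / ∏ i ∈ T, ((d i)! : ℚ) := by
  have hcorr := corr0_replicate_zero_add_map d T 2
  simp only [Multiset.replicate_succ, Multiset.replicate_zero, Multiset.cons_add, zero_add] at hcorr
  rw [hcorr, firstPassageCount]
  by_cases hsum : ∑ i ∈ T, d i + 1 = #T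
  · rw [if_pos (by omega), if_pos hsum, if_neg (by omega), one_mul,
      show #T + 2 - 3 = #T - 1 by omega]
  · simp [hsum]

lemma card_sub_one_mul_corr0_zero_cons_map :
    ((#T : ℚ) - 1) * corr0 (0 ::ₘ T.val.map d)
      = 1 / 2 * (firstPassageCount d 2 T / ∏ i ∈ T, ((d i)! : ℚ)) := by
  have hcorr := corr0_replicate_zero_add_map d T 1
  simp only [Multiset.replicate_one, Multiset.singleton_add] at hcorr
  rw [hcorr, firstPassageCount]
  by_cases hsum : ∑ i ∈ T, d i + 2 = #T
  · have hfact : ((#T - 1)! : ℚ) = ((#T : ℚ) - 1) * (#T + 1 - 3)! := by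
      rw [← Nat.mul_factorial_pred (show #T - 1 ≠ 0 by omega), Nat.cast_mul,
        Nat.cast_pred (by omega)]
      rfl
    rw [if_pos (by omega), if_pos hsum, if_neg (by omega), Nat.cast_mul, hfact, Nat.cast_ofNat]
    ring
  · simp [hsum]

end Correlators

theorem genus_zero_thm12_general {ι : Type*} [DecidableEq ι] (d : ι → ℕ) (T : Finset ι) :
    ((#T : ℚ) - 1) * corr0 (0 ::ₘ T.val.map d)
      = (1 / 2) * ∑ I ∈ T.powerset,
          corr0 (0 ::ₘ 0 ::ₘ I.val.map d) * corr0 (0 ::ₘ 0 ::ₘ (T \ I).val.map d) := by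
  rw [card_sub_one_mul_corr0_zero_cons_map, ← sum_powerset_firstPassageCount_mul d 1 1,
    Nat.cast_sum, sum_div]
  congr 1
  refine sum_congr rfl fun I hI => ?_
  rw [corr0_zero_cons_zero_cons_map, corr0_zero_cons_zero_cons_map, div_mul_div_comm,
    mul_comm (∏ i ∈ I, _), prod_sdiff (mem_powerset.mp hI), Nat.cast_mul]

/-- Genus-0 case of Theorem 1.2: for n ≥ 2 and ∑ d_j = n-2,
(n-1)·⟨τ₀ ∏ τ_{d_j}⟩₀ = (1/2)·∑_{I⊔J={1,…,n}} ⟨τ₀² ∏_I τ_{d_i}⟩₀·⟨τ₀² ∏_J τ_{d_j}⟩₀. -/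
theorem genus_zero_thm12 (n : ℕ) (hn : 2 ≤ n) (d : Fin n → ℕ)
    (hsum : ∑ j, d j = n - 2) :
    ((n : ℚ) - 1) * corr0 (0 ::ₘ Multiset.map d univ.val)
      = (1 / 2) * ∑ I ∈ univ.powerset,
          corr0 (0 ::ₘ 0 ::ₘ Multiset.map d I.val) *
            corr0 (0 ::ₘ 0 ::ₘ Multiset.map d (univ \ I).val) := by
  simpa only [card_univ, Fintype.card_fin] using genus_zero_thm12_general d univ
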